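/- arXiv:1504.03026 — 2 statements merged into one kernel-verified Lean document; each statement's English description precedes it below -/
import Mathlib

section
/- A balanced graph function β on a strongly connected directed graph G is the unique balanced graph function in its equivalence class if and only if, for every real number w, the subgraph G_β^w is strongly connected. -/
open Filter Topology

variable {V : Type*}

/-- Maximum weight of an edge leaving `v` (as a supremum over the finite edge set). -/
noncomputable def outMax (E : V → V → Prop) (α : V → V → ℝ) (v : V) : ℝ :=
  sSup {x : ℝ | ∃ w, E v w ∧ x = α v w}

/-- Maximum weight of an edge entering `v`. -/
noncomputable def inMax (E : V → V → Prop) (α : V → V → ℝ) (v : V) : ℝ :=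
  sSup {x : ℝ | ∃ u, E u v ∧ x = α u v}

/-- A graph function is balanced if the max outgoing weight equals the max incoming
weight at every vertex. -/
def IsBalancedGF (E : V → V → Prop) (α : V → V → ℝ) : Prop :=
  ∀ v, outMax E α v = inMax E α v

/-- Raising imbalance at `v`. -/
noncomputable def rhoR (E : V → V → Prop) (α : V → V → ℝ) (v : V) : ℝ :=
  max 0 (outMax E α v - inMax E α v)

/-- Lowering imbalance at `v`. -/
noncomputable def rhoL (E : V → V → Prop) (α : V → V → ℝ) (v : V) : ℝ :=
  max 0 (inMax E α v - outMax E α v)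

/-- A balancing operation at `v`: add `(α_v^out − α_v^in)/2` to every edge entering `v`
and subtract the same quantity from every edge leaving `v` (a self-loop is unchanged). -/
noncomputable def balanceAt [DecidableEq V] (E : V → V → Prop) (α : V → V → ℝ) (v : V) :
    V → V → ℝ :=
  fun a b =>
    α a b + (if b = v then (outMax E α v - inMax E α v) / 2 else 0)
          - (if a = v then (outMax E α v - inMax E α v) / 2 else 0)

/-- A raising operation at `v`: balance at `v` if the raising imbalance is positive,
otherwise do nothing. -/
noncomputable def raiseOp [DecidableEq V] (E : V → V → Prop) (α : V → V → ℝ) (v : V) :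
    V → V → ℝ :=
  if 0 < rhoR E α v then balanceAt E α v else α

/-- A lowering operation at `v`: balance at `v` if the lowering imbalance is positive,
otherwise do nothing. -/
noncomputable def lowerOp [DecidableEq V] (E : V → V → Prop) (α : V → V → ℝ) (v : V) :
    V → V → ℝ :=
  if 0 < rhoL E α v then balanceAt E α v else α

/-- A sequence of vertices is fair if every vertex appears infinitely often. -/
def Fair (σ : ℕ → V) : Prop := ∀ (v : V) (N : ℕ), ∃ t, N ≤ t ∧ σ t = v

/-- State after `t` raising operations along the sequence `σ`. -/
noncomputable def raiseIter [DecidableEq V] (E : V → V → Prop) (α : V → V → ℝ)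
    (σ : ℕ → V) : ℕ → V → V → ℝ
  | 0 => α
  | t + 1 => raiseOp E (raiseIter E α σ t) (σ t)

/-- State after `t` lowering operations along the sequence `σ`. -/
noncomputable def lowerIter [DecidableEq V] (E : V → V → Prop) (α : V → V → ℝ)
    (σ : ℕ → V) : ℕ → V → V → ℝ
  | 0 => α
  | t + 1 => lowerOp E (lowerIter E α σ t) (σ t)

/-- The raising vector: cumulative amount by which each vertex has been raised after
`t` raising operations along `σ`. -/
noncomputable def rvec [DecidableEq V] (E : V → V → Prop) (α : V → V → ℝ)
    (σ : ℕ → V) : ℕ → V → ℝ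
  | 0 => fun _ => 0
  | t + 1 => fun u =>
      rvec E α σ t u + (if u = σ t then rhoR E (raiseIter E α σ t) (σ t) / 2 else 0)

/-- State after performing raising operations along a finite list of vertices. -/
noncomputable def raiseList [DecidableEq V] (E : V → V → Prop) :
    (V → V → ℝ) → List V → V → V → ℝ
  | α, [] => α
  | α, v :: l => raiseList E (raiseOp E α v) l

/-- Raising vector accumulated along a finite list of raising operations. -/
noncomputable def rvecList [DecidableEq V] (E : V → V → Prop) :
    (V → V → ℝ) → List V → V → ℝ
  | _, [] => fun _ => 0
  | α, v :: l => fun u =>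
      (if u = v then rhoR E α v / 2 else 0) + rvecList E (raiseOp E α v) l u

/-- State after performing (unconditional) balancing operations along a list. -/
noncomputable def balList [DecidableEq V] (E : V → V → Prop) :
    (V → V → ℝ) → List V → V → V → ℝ
  | α, [] => α
  | α, v :: l => balList E (balanceAt E α v) l

/-- State after `t` balancing operations along the sequence `σ`. -/
noncomputable def balIter [DecidableEq V] (E : V → V → Prop) (α : V → V → ℝ)
    (σ : ℕ → V) : ℕ → V → V → ℝ
  | 0 => α
  | t + 1 => balanceAt E (balIter E α σ t) (σ t)

/-- Two graph functions are equivalent if their sums around every directed cycle agree. -/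
def Equivalent (E : V → V → Prop) (α γ : V → V → ℝ) : Prop :=
  ∀ (k : ℕ) (f : ZMod (k + 1) → V), (∀ i, E (f i) (f (i + 1))) →
    (∑ i, α (f i) (f (i + 1))) = ∑ i, γ (f i) (f (i + 1))

/-- The raising-balanced graph function determined by the limiting raising vector. -/
noncomputable def alphaR (α : V → V → ℝ) (rstar : V → ℝ) : V → V → ℝ :=
  fun u v => α u v + rstar v - rstar u

/-- Height of a vertex: `y_v = -r*_v`. -/
noncomputable def height (rstar : V → ℝ) (v : V) : ℝ := -rstar v

/-- Level of a vertex: maximum over incoming edges of `α^R`. -/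
noncomputable def level (E : V → V → Prop) (α : V → V → ℝ) (rstar : V → ℝ) (v : V) : ℝ :=
  inMax E (alphaR α rstar) v

/-- Momentum of a vertex: `m_v = max over edges (u,v) entering v of (α_{uv} − x_v)`. -/
noncomputable def momentum (E : V → V → Prop) (α : V → V → ℝ) (rstar : V → ℝ) (v : V) : ℝ :=
  sSup {c : ℝ | ∃ u, E u v ∧ c = α u v - level E α rstar v}

/-- The subgraph of edges of weight at least `w` (with isolated vertices removed)
is strongly connected: any two non-isolated vertices of the subgraph are joined by a
directed path using only edges of weight at least `w`. -/
def SCThreshold (E : V → V → Prop) (β : V → V → ℝ) (w : ℝ) : Prop :=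
  ∀ a b : V,
    (∃ c, (E a c ∧ w ≤ β a c) ∨ (E c a ∧ w ≤ β c a)) →
    (∃ c, (E b c ∧ w ≤ β b c) ∨ (E c b ∧ w ≤ β c b)) →
    Relation.ReflTransGen (fun p q => E p q ∧ w ≤ β p q) a b

/-!
Equivalent graph functions differ by a potential: `γ u v = β u v + r v - r u`.

If all thresholds are strongly connected, take the largest weight `w` of an edge on which `r` is
not constant. Then `r` takes a single value `ℓ` on the edges heavier than `w`. Suppose that `r`
increases along some edge of `G_β^w`. Either its head lies above `ℓ`, or its tail lies below `ℓ`.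
In the first case, balance of `γ` lets one leave the head along a `γ`-edge heavier than `w`, which
must increase `r` again, and so on forever; the second case is the same in the reversed graph. So
`r` is nonincreasing, hence constant, on the strongly connected `G_β^w`, contrary to the choice
of `w`.

Conversely, let `G_β^w` be minimal among the thresholds that are not strongly connected, and let `b`
be unreachable from `a` in it. Balanced potentials are the fixed points of simultaneous balancing,
which is monotone. Raising by a small `t` a predecessor-closed set of vertices leading to `b` gives
a subsolution, and raising by `t` the complement of a successor-closed set reached from `a` gives a
supersolution; between them there is a nonconstant fixed point.
-/

section Relation

variable {R : V → V → Prop} {a b : V}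

lemma exists_transGen_self_of_forall_exists_pred [Finite V]
    (hpred : ∀ x, Relation.ReflTransGen R x b → ∃ y, R y x) :
    ∃ x, Relation.ReflTransGen R x b ∧ Relation.TransGen R x x := by
  by_contra! hacyclic
  let above : V → V → Prop := fun x y => Relation.TransGen R x y ∧ Relation.ReflTransGen R y b
  have : IsTrans V above := ⟨fun _ _ _ hxy hyz => ⟨hxy.1.trans hyz.1, hyz.2⟩⟩
  have : Std.Irrefl above := ⟨fun x hx => hacyclic x hx.2 hx.1⟩
  obtain ⟨x, hxb, hmin⟩ := (Finite.wellFounded_of_trans_of_irrefl above).has_min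
    {x | Relation.ReflTransGen R x b} ⟨b, .refl⟩
  obtain ⟨y, hyx⟩ := hpred x hxb
  exact hmin y (hxb.head hyx) ⟨.single hyx, hxb⟩

lemma exists_predClosed_ancestors [Finite V]
    (hpred : ∀ x, Relation.ReflTransGen R x b → ∃ y, R y x) :
    ∃ S : Set V, S.Nonempty ∧ (∀ x ∈ S, Relation.ReflTransGen R x b) ∧
      (∀ x y, R x y → y ∈ S → x ∈ S) ∧ ∀ x ∈ S, ∃ y ∈ S, R x y := by
  obtain ⟨z, hzb, hzz⟩ := exists_transGen_self_of_forall_exists_pred hpred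
  refine ⟨{x | Relation.ReflTransGen R x z}, ⟨z, .refl⟩, fun x hxz => .trans hxz hzb,
    fun x y hxy hyz => .head hxy hyz, fun x hxz => ?_⟩
  obtain ⟨y, hxy, hyz⟩ := Relation.TransGen.head'_iff.1 (Relation.TransGen.trans_right hxz hzz)
  exact ⟨y, hyz, hxy⟩

lemma mem_of_reflTransGen_of_predClosed {S : Set V} (hpred : ∀ x y, R x y → y ∈ S → x ∈ S)
    (hab : Relation.ReflTransGen R a b) (hb : b ∈ S) : a ∈ S := by
  induction hab using Relation.ReflTransGen.head_induction_on with
  | refl => exact hb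
  | head hxy _ ih => exact hpred _ _ hxy ih

end Relation

section Order

lemma exists_fixedPoint_mem_Icc {α : Type*} [ConditionallyCompleteLattice α] {f : α → α} {a b : α}
    (hab : a ≤ b) (hf : MonotoneOn f (Set.Icc a b)) (ha : a ≤ f a) (hb : f b ≤ b) :
    ∃ x ∈ Set.Icc a b, f x = x := by
  have : Fact (a ≤ b) := ⟨hab⟩
  have hmaps : ∀ x ∈ Set.Icc a b, f x ∈ Set.Icc a b := fun x hx =>
    ⟨ha.trans (hf (Set.left_mem_Icc.2 hab) hx hx.1),
      (hf hx (Set.right_mem_Icc.2 hab) hx.2).trans hb⟩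
  let g : Set.Icc a b →o Set.Icc a b :=
    ⟨fun x => ⟨f x, hmaps x x.2⟩, fun x y hxy => hf x.2 y.2 hxy⟩
  exact ⟨g.lfp, g.lfp.2, congrArg Subtype.val g.map_lfp⟩

lemma exists_pos_forall_lt_imp_add_le {ι : Type*} [Finite ι] (f : ι → ℝ) (w : ℝ) :
    ∃ t, 0 < t ∧ ∀ i, f i < w → f i + t ≤ w := by
  have hsmall : ∀ i, ∀ᶠ t in 𝓝[>] (0 : ℝ), f i < w → f i + t ≤ w := fun i => by
    by_cases hi : f i < w
    · filter_upwards [Ioc_mem_nhdsGT (sub_pos.2 hi)] with t ht _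
      linarith [ht.2]
    · simp [hi]
  exact (eventually_mem_nhdsWithin.and (eventually_all.2 hsmall)).exists

end Order

section WalkWeight

variable {A : Type*} [AddCommMonoid A] {E : V → V → Prop} {δ : V → V → A} {u v w : V} {x y : A}

/-- `WalkWeight E δ u v x` says that some directed walk from `u` to `v` along edges of `E` has total
`δ`-weight `x`. It is used to integrate an edge weight whose cycle sums vanish to a potential. -/
inductive WalkWeight (E : V → V → Prop) (δ : V → V → A) : V → V → A → Prop
  | refl (u : V) : WalkWeight E δ u u 0
  | tail {u v w : V} {x : A} : WalkWeight E δ u v x → E v w → WalkWeight E δ u w (x + δ v w)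

lemma WalkWeight.trans (huv : WalkWeight E δ u v x) (hvw : WalkWeight E δ v w y) :
    WalkWeight E δ u w (x + y) := by
  induction hvw with
  | refl => simpa only [add_zero] using huv
  | tail _ hE ih => simpa only [add_assoc] using ih.tail hE

lemma WalkWeight.exists_of_reflTransGen (δ : V → V → A) (huv : Relation.ReflTransGen E u v) :
    ∃ x, WalkWeight E δ u v x := by
  induction huv with
  | refl => exact ⟨0, .refl u⟩
  | tail _ hE ih =>
    obtain ⟨x, hx⟩ := ih
    exact ⟨_, hx.tail hE⟩

lemma WalkWeight.exists_fin (h : WalkWeight E δ u v x) :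
    ∃ (n : ℕ) (f : Fin (n + 1) → V), f 0 = u ∧ f (Fin.last n) = v ∧
      (∀ i : Fin n, E (f i.castSucc) (f i.succ)) ∧
      ∑ i : Fin n, δ (f i.castSucc) (f i.succ) = x := by
  induction h with
  | refl => exact ⟨0, fun _ => u, rfl, rfl, fun i => i.elim0, rfl⟩
  | @tail v w x _ hE ih =>
    obtain ⟨n, f, rfl, rfl, hf, rfl⟩ := ih
    refine ⟨n + 1, Fin.snoc f w, ?_, by simp, fun i => ?_, ?_⟩
    · exact Fin.snoc_castSucc (α := fun _ => V) w f 0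
    · refine Fin.lastCases ?_ (fun j => ?_) i
      · simpa using hE
      · simpa [Fin.succ_castSucc, -Fin.castSucc_succ] using hf j
    · simp [Fin.sum_univ_castSucc, Fin.succ_castSucc, -Fin.castSucc_succ]

lemma WalkWeight.eq_zero_of_cycle_sum_eq_zero
    (hcycle : ∀ (k : ℕ) (f : ZMod (k + 1) → V), (∀ i, E (f i) (f (i + 1))) →
      ∑ i, δ (f i) (f (i + 1)) = 0)
    (h : WalkWeight E δ u u x) : x = 0 := by
  obtain ⟨n, f, hfirst, hlast, hE, rfl⟩ := h.exists_fin
  cases n with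
  | zero => rfl
  | succ k =>
    have hnext : ∀ i : Fin (k + 1), f (i + 1).castSucc = f i.succ := fun i => by
      refine Fin.lastCases ?_ (fun j => ?_) i
      · simp [hfirst, hlast]
      · rw [Fin.coeSucc_eq_succ, Fin.succ_castSucc]
    -- `ZMod (k + 1)` is by definition `Fin (k + 1)`.
    have hsum : ∑ i : Fin (k + 1), δ (f i.castSucc) (f (i + 1).castSucc) = 0 :=
      hcycle k (fun i : Fin (k + 1) => f i.castSucc) fun i => (hnext i).symm ▸ hE i
    simpa only [hnext] using hsum

end WalkWeight

lemma exists_potential_of_cycle_sum_eq_zero {A : Type*} [AddCommGroup A] {E : V → V → Prop}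
    {δ : V → V → A} (hconn : ∀ u v, Relation.ReflTransGen E u v)
    (hcycle : ∀ (k : ℕ) (f : ZMod (k + 1) → V), (∀ i, E (f i) (f (i + 1))) →
      ∑ i, δ (f i) (f (i + 1)) = 0) :
    ∃ r : V → A, ∀ u v, E u v → δ u v = r v - r u := by
  rcases isEmpty_or_nonempty V with _ | ⟨⟨o⟩⟩
  · exact ⟨0, isEmptyElim⟩
  choose r hr using fun v => WalkWeight.exists_of_reflTransGen δ (hconn o v)
  refine ⟨r, fun u v huv => ?_⟩
  obtain ⟨y, hy⟩ := WalkWeight.exists_of_reflTransGen δ (hconn v o)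
  have hdirect : r v + y = 0 := ((hr v).trans hy).eq_zero_of_cycle_sum_eq_zero hcycle
  have hvia : r u + δ u v + y = 0 :=
    (((hr u).tail huv).trans hy).eq_zero_of_cycle_sum_eq_zero hcycle
  exact eq_sub_of_add_eq' (add_right_cancel (hvia.trans hdirect.symm))

section GraphFunction

variable {E : V → V → Prop} {α β γ : V → V → ℝ} {r : V → ℝ} {w : ℝ} {a b p q u v : V}

lemma finite_outWeights [Finite V] (E : V → V → Prop) (α : V → V → ℝ) (u : V) :
    {x : ℝ | ∃ v, E u v ∧ x = α u v}.Finite :=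
  (Set.finite_range (α u)).subset <| by
    rintro _ ⟨v, -, rfl⟩
    exact ⟨v, rfl⟩

lemma le_outMax [Finite V] (α : V → V → ℝ) (huv : E u v) : α u v ≤ outMax E α u :=
  le_csSup (finite_outWeights E α u).bddAbove ⟨v, huv, rfl⟩

lemma le_inMax [Finite V] (α : V → V → ℝ) (huv : E u v) : α u v ≤ inMax E α v :=
  le_outMax (E := flip E) (flip α) huv

lemma exists_eq_outMax [Finite V] (α : V → V → ℝ) (hout : ∃ v, E u v) :
    ∃ v, E u v ∧ α u v = outMax E α u := by
  obtain ⟨v, huv⟩ := hout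
  have hne : {x : ℝ | ∃ v, E u v ∧ x = α u v}.Nonempty := ⟨_, v, huv, rfl⟩
  obtain ⟨v', huv', hv'⟩ := hne.csSup_mem (finite_outWeights E α u)
  exact ⟨v', huv', hv'.symm⟩

lemma exists_eq_inMax [Finite V] (α : V → V → ℝ) (hin : ∃ u, E u v) :
    ∃ u, E u v ∧ α u v = inMax E α v :=
  exists_eq_outMax (E := flip E) (flip α) hin

lemma outMax_congr (h : ∀ v, E u v → α u v = γ u v) : outMax E α u = outMax E γ u :=
  congrArg sSup <| Set.ext fun _ => exists_congr fun v => and_congr_right fun huv => by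
    rw [h v huv]

lemma inMax_congr (h : ∀ u, E u v → α u v = γ u v) : inMax E α v = inMax E γ v :=
  outMax_congr (E := flip E) (α := flip α) (γ := flip γ) h

lemma IsBalancedGF.congr (hα : IsBalancedGF E α) (h : ∀ u v, E u v → α u v = γ u v) :
    IsBalancedGF E γ := fun v =>
  (outMax_congr (h v)).symm.trans ((hα v).trans (inMax_congr fun u => h u v))

lemma IsBalancedGF.flip (hα : IsBalancedGF E α) : IsBalancedGF (flip E) (flip α) :=
  fun v => (hα v).symm

lemma SCThreshold.flip (h : SCThreshold E β w) : SCThreshold (flip E) (flip β) w :=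
  fun a b ⟨c, hc⟩ ⟨d, hd⟩ => (h b a ⟨d, hd.symm⟩ ⟨c, hc.symm⟩).swap

lemma alphaR_zero (β : V → V → ℝ) : alphaR β 0 = β := by
  funext u v
  simp [alphaR]

lemma alphaR_const_sub (β : V → V → ℝ) (r : V → ℝ) (t : ℝ) :
    alphaR (flip β) (fun v => t - r v) = flip (alphaR β r) := by
  funext u v
  simp only [alphaR, flip]
  ring

lemma equivalent_alphaR (E : V → V → Prop) (β : V → V → ℝ) (r : V → ℝ) :
    Equivalent E β (alphaR β r) := by
  intro k f _
  have hshift : ∑ i, r (f (i + 1)) = ∑ i, r (f i) :=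
    Equiv.sum_comp (Equiv.addRight 1) fun i => r (f i)
  simp only [alphaR, Finset.sum_sub_distrib, Finset.sum_add_distrib, hshift, add_sub_cancel_right]

lemma Equivalent.exists_eq_alphaR (h : Equivalent E β γ)
    (hconn : ∀ u v, Relation.ReflTransGen E u v) :
    ∃ r, ∀ u v, E u v → γ u v = alphaR β r u v := by
  obtain ⟨r, hr⟩ := exists_potential_of_cycle_sum_eq_zero (δ := fun u v => γ u v - β u v) hconn
    fun k f hf => by rw [Finset.sum_sub_distrib, h k f hf, sub_self]
  exact ⟨r, fun u v huv => by rw [alphaR, add_sub_assoc, ← hr u v huv, add_sub_cancel]⟩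

/-- The edge relation of the threshold subgraph `G_β^w`. In terms of it, a vertex `a` is not
isolated in `G_β^w` when `∃ c, ThresholdEdge E β w a c ∨ ThresholdEdge E β w c a`. -/
def ThresholdEdge (E : V → V → Prop) (β : V → V → ℝ) (w : ℝ) (u v : V) : Prop :=
  E u v ∧ w ≤ β u v

lemma SCThreshold.reflTransGen (h : SCThreshold E β w) (hua : ThresholdEdge E β w u a)
    (hbv : ThresholdEdge E β w b v) : Relation.ReflTransGen (ThresholdEdge E β w) a b :=
  h a b ⟨u, .inr hua⟩ ⟨v, .inl hbv⟩

lemma reflTransGen_of_forall_scThreshold (hout : ∀ v, ∃ w, E v w) (hin : ∀ v, ∃ u, E u v)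
    (hsc : ∀ w, SCThreshold E β w) (a b : V) : Relation.ReflTransGen E a b := by
  obtain ⟨u, hua⟩ := hin a
  obtain ⟨v, hbv⟩ := hout b
  have hpath := (hsc (min (β u a) (β b v))).reflTransGen ⟨hua, min_le_left _ _⟩
    ⟨hbv, min_le_right _ _⟩
  exact Relation.ReflTransGen.mono (fun _ _ => And.left) _ _ hpath

/-! ### Uniqueness from strongly connected thresholds -/

lemma le_of_heavier_tails_lt [Finite V] (hout : ∀ v, ∃ w, E v w)
    (hbal : IsBalancedGF E (alphaR β r)) (hpq : ThresholdEdge E β w p q)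
    (htails : ∀ u v, E u v → w < β u v → r u < r q) : r q ≤ r p := by
  by_contra! hlt
  have hq : w < inMax E (alphaR β r) q := by
    refine lt_of_lt_of_le ?_ (le_inMax _ hpq.1)
    linarith [hpq.2, show alphaR β r p q = β p q + r q - r p from rfl]
  obtain ⟨v, ⟨hqv, hwv⟩, hmax⟩ := Set.exists_max_image
    {v | r q ≤ r v ∧ w < inMax E (alphaR β r) v} r (Set.toFinite _) ⟨q, le_rfl, hq⟩
  obtain ⟨v', hvv', hv'⟩ := exists_eq_outMax (alphaR β r) (hout v)
  have hheavy : w < alphaR β r v v' := by rwa [hv', hbal v]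
  have hlight : β v v' ≤ w := not_lt.1 fun h => (htails v v' hvv' h).not_ge hqv
  have hclimb : r v < r v' := by
    linarith [show alphaR β r v v' = β v v' + r v' - r v from rfl]
  exact hclimb.not_ge (hmax v' ⟨hqv.trans hclimb.le, hheavy.trans_le (le_inMax _ hvv')⟩)

lemma le_of_lt_heavier_heads [Finite V] (hin : ∀ v, ∃ u, E u v)
    (hbal : IsBalancedGF E (alphaR β r)) (hpq : ThresholdEdge E β w p q)
    (hheads : ∀ u v, E u v → w < β u v → r p < r v) : r q ≤ r p := by
  have hle := le_of_heavier_tails_lt (E := flip E) (β := flip β) (r := fun v => 0 - r v) hin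
    (by rw [alphaR_const_sub]; exact hbal.flip) hpq
    fun u v huv hw => sub_lt_sub_left (hheads v u huv hw) 0
  exact (sub_le_sub_iff_left 0).1 hle

lemma eq_of_constant_on_heavier (hsc : ∀ w, SCThreshold E β w)
    (hconst : ∀ u v, E u v → w < β u v → r u = r v) {c d : V} (hab : E a b) (hwab : w < β a b)
    (hcd : E c d) (hwcd : w < β c d) : r b = r c := by
  have hpath := (hsc (min (β a b) (β c d))).reflTransGen ⟨hab, min_le_left _ _⟩
    ⟨hcd, min_le_right _ _⟩
  have hlift := hpath.lift (p := (· = ·)) r fun u v huv =>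
    hconst u v huv.1 ((lt_min hwab hwcd).trans_le huv.2)
  rwa [Relation.reflTransGen_eq_self] at hlift

lemma le_of_constant_on_heavier [Finite V] (hout : ∀ v, ∃ w, E v w) (hin : ∀ v, ∃ u, E u v)
    (hsc : ∀ w, SCThreshold E β w) (hbal : IsBalancedGF E (alphaR β r))
    (hconst : ∀ u v, E u v → w < β u v → r u = r v) (hpq : ThresholdEdge E β w p q) :
    r q ≤ r p := by
  by_cases htails : ∀ u v, E u v → w < β u v → r u < r q
  · exact le_of_heavier_tails_lt hout hbal hpq htails
  · push Not at htails
    obtain ⟨a, b, hab, hwab, hqa⟩ := htails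
    by_contra! hlt
    refine hlt.not_ge (le_of_lt_heavier_heads hin hbal hpq fun c d hcd hwcd => ?_)
    calc r p < r q := hlt
      _ ≤ r a := hqa
      _ = r b := hconst a b hab hwab
      _ = r c := eq_of_constant_on_heavier hsc hconst hab hwab hcd hwcd
      _ = r d := hconst c d hcd hwcd

theorem IsBalancedGF.potential_eq_of_forall_scThreshold [Finite V] (hout : ∀ v, ∃ w, E v w)
    (hin : ∀ v, ∃ u, E u v) (hsc : ∀ w, SCThreshold E β w)
    (hbal : IsBalancedGF E (alphaR β r)) (huv : E u v) : r u = r v := by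
  by_contra hne
  obtain ⟨⟨x, y⟩, ⟨hxy, hrxy⟩, hmax⟩ := Set.exists_max_image
    {e : V × V | E e.1 e.2 ∧ r e.1 ≠ r e.2} (fun e => β e.1 e.2) (Set.toFinite _) ⟨(u, v), huv, hne⟩
  have hconst : ∀ u v, E u v → β x y < β u v → r u = r v := fun u v huv hw =>
    by_contra fun hne => (hmax (u, v) ⟨huv, hne⟩).not_gt hw
  have hanti : ∀ p q, ThresholdEdge E β (β x y) p q → r q ≤ r p := fun p q =>
    le_of_constant_on_heavier hout hin hsc hbal hconst
  have hback := ((hsc (β x y)).reflTransGen ⟨hxy, le_rfl⟩ ⟨hxy, le_rfl⟩).lift (p := (· ≥ ·)) r hanti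
  rw [Relation.reflTransGen_eq_self] at hback
  exact hrxy (le_antisymm hback (hanti x y ⟨hxy, le_rfl⟩))

/-! ### A second balanced function from a disconnected threshold -/

/-- One step of simultaneous balancing, read on potentials: every vertex `v` is raised by half the
imbalance of `alphaR β r` at `v`. Its fixed points are the `r` for which `alphaR β r` is
balanced. -/
noncomputable def balanceStep (E : V → V → Prop) (β : V → V → ℝ) (r : V → ℝ) : V → ℝ :=
  fun v => r v + (outMax E (alphaR β r) v - inMax E (alphaR β r) v) / 2

lemma isBalancedGF_alphaR_iff : IsBalancedGF E (alphaR β r) ↔ balanceStep E β r = r := by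
  simp [IsBalancedGF, balanceStep, funext_iff, sub_eq_zero]

lemma balanceStep_mono [Finite V] (hout : ∀ v, ∃ w, E v w) (hin : ∀ v, ∃ u, E u v) :
    Monotone (balanceStep E β) := by
  intro r s hrs v
  obtain ⟨a, hva, ha⟩ := exists_eq_outMax (alphaR β r) (hout v)
  obtain ⟨b, hbv, hb⟩ := exists_eq_inMax (alphaR β s) (hin v)
  have hout_le : β v a + s a - s v ≤ outMax E (alphaR β s) v := le_outMax (alphaR β s) hva
  have hin_le : β b v + r v - r b ≤ inMax E (alphaR β r) v := le_inMax (alphaR β r) hbv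
  simp only [balanceStep, ← ha, ← hb]
  simp only [alphaR] at hout_le hin_le ⊢
  linarith [hrs a, hrs b]

lemma balanceStep_const_sub (E : V → V → Prop) (β : V → V → ℝ) (r : V → ℝ) (t : ℝ) :
    balanceStep (flip E) (flip β) (fun v => t - r v) = fun v => t - balanceStep E β r v := by
  funext v
  have hout : outMax (flip E) (flip (alphaR β r)) v = inMax E (alphaR β r) v := rfl
  have hin : inMax (flip E) (flip (alphaR β r)) v = outMax E (alphaR β r) v := rfl
  simp only [balanceStep, alphaR_const_sub, hout, hin]
  ring

lemma indicator_le_balanceStep [Finite V] (hout : ∀ v, ∃ w, E v w) (hin : ∀ v, ∃ u, E u v)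
    (hβ : IsBalancedGF E β) {S : Set V} {t : ℝ} (ht : 0 ≤ t)
    (hmax : ∀ v ∈ S, ∃ d ∈ S, E v d ∧ β v d = outMax E β v)
    (hgap : ∀ u ∉ S, ∀ v ∈ S, E u v → β u v + t ≤ inMax E β v) :
    S.indicator (fun _ => t) ≤ balanceStep E β (S.indicator fun _ => t) := by
  intro v
  by_cases hv : v ∈ S
  · obtain ⟨d, hdS, hvd, hd⟩ := hmax v hv
    obtain ⟨e, hev, he⟩ := exists_eq_inMax (alphaR β (S.indicator fun _ => t)) (hin v)
    have hout_le := le_outMax (alphaR β (S.indicator fun _ => t)) hvd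
    have hin_le : alphaR β (S.indicator fun _ => t) e v ≤ inMax E β v := by
      by_cases heS : e ∈ S
      · simpa [alphaR, hv, heS] using le_inMax β hev
      · simpa [alphaR, hv, heS] using hgap e heS v hv hev
    simp only [alphaR, Set.indicator_of_mem hv, Set.indicator_of_mem hdS] at hout_le
    rw [balanceStep]
    linarith [hβ v]
  · have hzero : balanceStep E β 0 = 0 :=
      isBalancedGF_alphaR_iff.1 (by rwa [alphaR_zero])
    have hnonneg : 0 ≤ S.indicator fun _ => t := Set.indicator_nonneg fun _ _ => ht
    calc S.indicator (fun _ => t) v = balanceStep E β 0 v := by simp [hv, hzero]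
      _ ≤ balanceStep E β (S.indicator fun _ => t) v := balanceStep_mono hout hin hnonneg v

lemma IsBalancedGF.exists_thresholdEdge_pred [Finite V] (hβ : IsBalancedGF E β) (hin : ∃ u, E u v)
    (hv : ∃ c, ThresholdEdge E β w v c ∨ ThresholdEdge E β w c v) :
    ∃ u, ThresholdEdge E β w u v := by
  obtain ⟨c, hvc | hcv⟩ := hv
  · obtain ⟨u, huv, hu⟩ := exists_eq_inMax β hin
    exact ⟨u, huv, by rw [hu, ← hβ v]; exact hvc.2.trans (le_outMax β hvc.1)⟩
  · exact ⟨c, hcv⟩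

lemma exists_mem_eq_outMax_of_predClosed [Finite V] (hout : ∃ w, E v w)
    (hsub : ∀ w', ThresholdEdge E β w' < ThresholdEdge E β w → SCThreshold E β w') {S : Set V}
    (hpred : ∀ x y, ThresholdEdge E β w x y → y ∈ S → x ∈ S) (hv : v ∈ S)
    (hsucc : ∃ c ∈ S, ThresholdEdge E β w v c) :
    ∃ d ∈ S, E v d ∧ β v d = outMax E β v := by
  obtain ⟨c, hcS, hvc⟩ := hsucc
  obtain ⟨d, hvd, hd⟩ := exists_eq_outMax β hout
  rcases (le_outMax β hvc.1).eq_or_lt with hc | hc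
  · exact ⟨c, hcS, hvc.1, hc⟩
  · rw [← hd] at hc
    have hle : ThresholdEdge E β (β v d) ≤ ThresholdEdge E β w := fun x y hxy =>
      ⟨hxy.1, (hvc.2.trans hc.le).trans hxy.2⟩
    have hlt : ThresholdEdge E β (β v d) < ThresholdEdge E β w :=
      hle.lt_of_not_ge fun hge => (hge v c hvc).2.not_gt hc
    have hback := (hsub _ hlt).reflTransGen ⟨hvd, le_rfl⟩ ⟨hvd, le_rfl⟩
    exact ⟨d, mem_of_reflTransGen_of_predClosed hpred
      (Relation.ReflTransGen.mono hle _ _ hback) hv, hvd, hd⟩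

lemma exists_indicator_le_balanceStep [Finite V] (hout : ∀ v, ∃ w, E v w) (hin : ∀ v, ∃ u, E u v)
    (hβ : IsBalancedGF E β)
    (hsub : ∀ w', ThresholdEdge E β w' < ThresholdEdge E β w → SCThreshold E β w')
    (hb : ∃ c, ThresholdEdge E β w b c ∨ ThresholdEdge E β w c b) :
    ∃ S : Set V, S.Nonempty ∧ (∀ s ∈ S, Relation.ReflTransGen (ThresholdEdge E β w) s b) ∧
      ∀ t, 0 ≤ t → (∀ u v, β u v < w → β u v + t ≤ w) →
        S.indicator (fun _ => t) ≤ balanceStep E β (S.indicator fun _ => t) := by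
  obtain ⟨S, hne, hSb, hpred, hsucc⟩ := exists_predClosed_ancestors (R := ThresholdEdge E β w)
    (b := b) fun x hxb => hβ.exists_thresholdEdge_pred (hin x) <| by
      rcases hxb.cases_head with rfl | ⟨c, hxc, _⟩
      · exact hb
      · exact ⟨c, .inl hxc⟩
  refine ⟨S, hne, hSb, fun t ht hgap => indicator_le_balanceStep hout hin hβ ht
    (fun v hv => exists_mem_eq_outMax_of_predClosed (hout v) hsub hpred hv (hsucc v hv))
    fun u hu v hv huv => ?_⟩
  obtain ⟨c, -, hvc⟩ := hsucc v hv
  calc β u v + t ≤ w := hgap u v (not_le.1 fun hw => hu (hpred u v ⟨huv, hw⟩ hv))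
    _ ≤ outMax E β v := hvc.2.trans (le_outMax β hvc.1)
    _ = inMax E β v := hβ v

lemma exists_balanceStep_le_indicator_compl [Finite V] (hout : ∀ v, ∃ w, E v w)
    (hin : ∀ v, ∃ u, E u v) (hβ : IsBalancedGF E β)
    (hsub : ∀ w', ThresholdEdge E β w' < ThresholdEdge E β w → SCThreshold E β w')
    (ha : ∃ c, ThresholdEdge E β w a c ∨ ThresholdEdge E β w c a) :
    ∃ T : Set V, T.Nonempty ∧ (∀ s ∈ T, Relation.ReflTransGen (ThresholdEdge E β w) a s) ∧
      ∀ t, 0 ≤ t → (∀ u v, β u v < w → β u v + t ≤ w) →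
        balanceStep E β (Tᶜ.indicator fun _ => t) ≤ Tᶜ.indicator fun _ => t := by
  obtain ⟨T, hne, haT, hstep⟩ := exists_indicator_le_balanceStep (E := flip E) (β := flip β)
    hin hout hβ.flip (fun w' hw' => (hsub w' ⟨fun u v => hw'.1 v u,
      fun hge => hw'.2 fun u v => hge v u⟩).flip) (ha.imp fun _ => Or.symm)
  refine ⟨T, hne, fun s hs => (haT s hs).swap, fun t ht hgap v => ?_⟩
  have hcompl : (Tᶜ.indicator fun _ => t) = fun v => t - T.indicator (fun _ => t) v :=
    Set.indicator_compl T _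
  rw [hcompl]
  exact (congrFun (balanceStep_const_sub (flip E) (flip β) _ t) v).trans_le
    (sub_le_sub_left (hstep t ht (fun u v => hgap v u) v) t)

lemma exists_minimal_not_scThreshold [Finite V] (hw : ¬ SCThreshold E β w) :
    ∃ w, ¬ SCThreshold E β w ∧
      ∀ w', ThresholdEdge E β w' < ThresholdEdge E β w → SCThreshold E β w' := by
  obtain ⟨w, hw, hmin⟩ := exists_minimalFor_of_wellFoundedLT (fun w => ¬ SCThreshold E β w)
    (ThresholdEdge E β) ⟨w, hw⟩
  exact ⟨w, hw, fun w' hlt => by_contra fun hw' => hlt.not_ge (hmin hw' hlt.le)⟩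

theorem IsBalancedGF.exists_nonconstant_of_not_scThreshold [Finite V] (hout : ∀ v, ∃ w, E v w)
    (hin : ∀ v, ∃ u, E u v) (hβ : IsBalancedGF E β) (hw : ¬ SCThreshold E β w) :
    ∃ r, IsBalancedGF E (alphaR β r) ∧ ∃ u v, r u ≠ r v := by
  obtain ⟨w, hw, hsub⟩ := exists_minimal_not_scThreshold hw
  simp only [SCThreshold, not_forall] at hw
  obtain ⟨a, b, ha, hb, hab⟩ := hw
  obtain ⟨S, ⟨s, hs⟩, hSb, hS⟩ := exists_indicator_le_balanceStep hout hin hβ hsub hb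
  obtain ⟨T, ⟨s', hs'⟩, haT, hT⟩ := exists_balanceStep_le_indicator_compl hout hin hβ hsub ha
  obtain ⟨t, ht, hgap⟩ := exists_pos_forall_lt_imp_add_le (fun e : V × V => β e.1 e.2) w
  have hgap' : ∀ u v, β u v < w → β u v + t ≤ w := fun u v => hgap (u, v)
  have hdisj : S ⊆ Tᶜ := fun x hxS hxT => hab ((haT x hxT).trans (hSb x hxS))
  obtain ⟨r, ⟨hSr, hrT⟩, hfix⟩ := exists_fixedPoint_mem_Icc
    (Set.indicator_le_indicator_of_subset hdisj fun _ => ht.le)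
    ((balanceStep_mono hout hin).monotoneOn _) (hS t ht.le hgap') (hT t ht.le hgap')
  refine ⟨r, isBalancedGF_alphaR_iff.2 hfix, s, s', ne_of_gt ?_⟩
  calc r s' ≤ Tᶜ.indicator (fun _ => t) s' := hrT s'
    _ = 0 := Set.indicator_of_notMem (Set.notMem_compl_iff.2 hs') _
    _ < t := ht
    _ = S.indicator (fun _ => t) s := (Set.indicator_of_mem hs fun _ => t).symm
    _ ≤ r s := hSr s

end GraphFunction

theorem unique_balance_iff_thresholds_strongly_connected_general [Finite V] {E : V → V → Prop}
    (hout : ∀ v, ∃ w, E v w) (hin : ∀ v, ∃ u, E u v) (hconn : ∀ u v, Relation.EqvGen E u v)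
    {β : V → V → ℝ} (hβ : IsBalancedGF E β) :
    (∀ γ : V → V → ℝ, IsBalancedGF E γ → Equivalent E β γ → ∀ u v, E u v → γ u v = β u v) ↔
      ∀ w : ℝ, SCThreshold E β w := by
  refine ⟨fun huniq w => ?_, fun hsc γ hγ hβγ u v huv => ?_⟩
  · by_contra hw
    obtain ⟨r, hbal, u, v, hne⟩ := hβ.exists_nonconstant_of_not_scThreshold hout hin hw
    have hedge : ∀ u v, E u v → r u = r v := fun u v huv => by
      linarith [huniq _ hbal (equivalent_alphaR E β r) u v huv,
        show alphaR β r u v = β u v + r v - r u from rfl]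
    exact hne (Relation.EqvGen.eqvGen_le (r' := (r · = r ·)) hedge u v (hconn u v))
  · obtain ⟨r, hr⟩ := hβγ.exists_eq_alphaR (reflTransGen_of_forall_scThreshold hout hin hsc)
    have hedge : r u = r v := (hγ.congr hr).potential_eq_of_forall_scThreshold hout hin hsc huv
    rw [hr u v huv, alphaR, hedge, add_sub_cancel_right]

/-- A balanced graph function `β` on a strongly connected directed
graph is the unique balanced graph function in its equivalence class if and only if
`G_β^w` is strongly connected for every real `w`. -/
theorem unique_balance_iff_thresholds_strongly_connected
    [Fintype V] [Nonempty V] (E : V → V → Prop)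
    (hout : ∀ v, ∃ w, E v w) (hin : ∀ v, ∃ u, E u v)
    (hconn : ∀ u v : V, Relation.ReflTransGen E u v)
    (β : V → V → ℝ) (hβ : IsBalancedGF E β) :
    (∀ γ : V → V → ℝ, IsBalancedGF E γ → Equivalent E β γ →
      ∀ u v, E u v → γ u v = β u v) ↔
    (∀ w : ℝ, SCThreshold E β w) :=
  unique_balance_iff_thresholds_strongly_connected_general hout hin
    (fun u v => Relation.EqvGen.reflTransGen_le_eqvGen E u v (hconn u v)) hβ
end

section
/- Let r and s be raising vectors obtained from a common initial graph function α via (possibly different) finite sequences of raising operations, and suppose r ≤ s coordinatewise. Let r' and s' be the raising vectors obtained from r and s respectively after one additional raising operation performed at a common vertex v. Then r' ≤ s' coordinatewise. -/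
open Filter Topology

variable {V : Type*}

/-!
Write `A r = sup_w (α_{vw} + r_w)` and `B r = sup_u (α_{uv} - r_u)`, over the edges leaving and
entering `v`. In the graph function with raising vector `r`, the outgoing and incoming suprema at
`v` are `A r - r_v` and `B r + r_v`, so a raising operation at `v` replaces `r_v` by
`max r_v ((A r - B r) / 2)`. This is monotone in `r`, since `A` is monotone and `B` is antitone.
-/

section Maxima

variable {E : V → V → Prop} {α : V → V → ℝ}

theorem outMax_eq_iSup (E : V → V → Prop) (α : V → V → ℝ) (v : V) :
    outMax E α v = ⨆ w : {w // E v w}, α v w := by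
  simp [outMax, iSup, Set.range, eq_comm]

theorem inMax_eq_iSup (E : V → V → Prop) (α : V → V → ℝ) (v : V) :
    inMax E α v = ⨆ u : {u // E u v}, α u v := by
  simp [inMax, iSup, Set.range, eq_comm]

/-- The weights of the edges leaving each vertex, and those of the edges entering it, are bounded
above. On a possibly infinite graph this is what makes `outMax` and `inMax` genuine suprema. -/
structure LocallyBddAbove (E : V → V → Prop) (α : V → V → ℝ) : Prop where
  leaving : ∀ v, BddAbove (Set.range fun w : {w // E v w} => α v w)
  entering : ∀ v, BddAbove (Set.range fun u : {u // E u v} => α u v)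

namespace LocallyBddAbove

theorem of_finite [Finite V] (E : V → V → Prop) (α : V → V → ℝ) : LocallyBddAbove E α where
  leaving _ := (Set.finite_range _).bddAbove
  entering _ := (Set.finite_range _).bddAbove

protected theorem alphaR {r : V → ℝ} (h : LocallyBddAbove E α) (hr : BddAbove (Set.range r))
    (hr' : BddBelow (Set.range r)) : LocallyBddAbove E (alphaR α r) := by
  obtain ⟨M, hM⟩ := hr
  obtain ⟨m, hm⟩ := hr'
  rw [mem_upperBounds, Set.forall_mem_range] at hM
  rw [mem_lowerBounds, Set.forall_mem_range] at hm
  refine ⟨fun v => ?_, fun v => ?_⟩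
  · obtain ⟨b, hb⟩ := h.leaving v
    rw [mem_upperBounds, Set.forall_mem_range] at hb
    exact ⟨b + M - m, Set.forall_mem_range.2 fun w =>
      sub_le_sub (add_le_add (hb w) (hM w)) (hm v)⟩
  · obtain ⟨b, hb⟩ := h.entering v
    rw [mem_upperBounds, Set.forall_mem_range] at hb
    exact ⟨b + M - m, Set.forall_mem_range.2 fun u =>
      sub_le_sub (add_le_add (hb u) (hM v)) (hm u)⟩

end LocallyBddAbove

theorem outMax_alphaR_add_le {r s : V → ℝ} {v : V} (hs : LocallyBddAbove E (alphaR α s))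
    (hout : ∃ w, E v w) (hrs : r ≤ s) :
    outMax E (alphaR α r) v + r v ≤ outMax E (alphaR α s) v + s v := by
  have : Nonempty {w // E v w} := nonempty_subtype.2 hout
  rw [outMax_eq_iSup, outMax_eq_iSup, ← le_sub_iff_add_le]
  refine ciSup_le fun w => ?_
  have hle := le_ciSup (hs.leaving v) w
  simp only [alphaR] at hle ⊢
  linarith [hrs w]

theorem inMax_alphaR_sub_le {r s : V → ℝ} {v : V} (hr : LocallyBddAbove E (alphaR α r))
    (hin : ∃ u, E u v) (hrs : r ≤ s) :
    inMax E (alphaR α s) v - s v ≤ inMax E (alphaR α r) v - r v := by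
  have : Nonempty {u // E u v} := nonempty_subtype.2 hin
  rw [inMax_eq_iSup, inMax_eq_iSup, sub_le_iff_le_add]
  refine ciSup_le fun u => ?_
  have hle := le_ciSup (hr.entering v) u
  simp only [alphaR] at hle ⊢
  linarith [hrs u]

theorem add_half_rhoR (E : V → V → Prop) (α : V → V → ℝ) (v : V) (x : ℝ) :
    x + rhoR E α v / 2 = max x (((outMax E α v + x) - (inMax E α v - x)) / 2) := by
  rw [rhoR, ← max_div_div_right zero_le_two, ← max_add_add_left]
  ring_nf

end Maxima

section RaisingVectors

variable [DecidableEq V] {E : V → V → Prop} {α : V → V → ℝ}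

/-- The raising vector after a raising operation at `v`, when the raising vector before it is `r`
and the initial graph function is `α`. The graph function to which the operation applies is
`alphaR α r`. -/
noncomputable def raiseVector (E : V → V → Prop) (α : V → V → ℝ) (v : V) (r : V → ℝ) : V → ℝ :=
  r + Pi.single v (rhoR E (alphaR α r) v / 2)

theorem raiseVector_apply_self (E : V → V → Prop) (α : V → V → ℝ) (v : V) (r : V → ℝ) :
    raiseVector E α v r v =
      max (r v) (((outMax E (alphaR α r) v + r v) - (inMax E (alphaR α r) v - r v)) / 2) := by
  rw [raiseVector, Pi.add_apply, Pi.single_eq_same, add_half_rhoR]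

theorem raiseVector_apply_of_ne {u v : V} (huv : u ≠ v) (r : V → ℝ) :
    raiseVector E α v r u = r u := by
  rw [raiseVector, Pi.add_apply, Pi.single_eq_of_ne huv, add_zero]

theorem raiseVector_mono {r s : V → ℝ} {v : V} (hr : LocallyBddAbove E (alphaR α r))
    (hs : LocallyBddAbove E (alphaR α s)) (hout : ∃ w, E v w) (hin : ∃ u, E u v) (hrs : r ≤ s) :
    raiseVector E α v r ≤ raiseVector E α v s := by
  intro u
  obtain rfl | huv := eq_or_ne u v
  · rw [raiseVector_apply_self, raiseVector_apply_self]
    gcongr max ?_ ((?_ - ?_) / 2)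
    · exact hrs u
    · exact outMax_alphaR_add_le hs hout hrs
    · exact inMax_alphaR_sub_le hr hin hrs
  · rw [raiseVector_apply_of_ne huv, raiseVector_apply_of_ne huv]
    exact hrs u

theorem raiseOp_eq_alphaR (E : V → V → Prop) (α : V → V → ℝ) (v : V) :
    raiseOp E α v = alphaR α (Pi.single v (rhoR E α v / 2)) := by
  ext a b
  by_cases hpos : 0 < rhoR E α v
  · have hρ : rhoR E α v = outMax E α v - inMax E α v :=
      max_eq_right ((lt_max_iff.1 hpos).resolve_left (lt_irrefl 0)).le
    rw [raiseOp, if_pos hpos, hρ]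
    simp only [balanceAt, alphaR, Pi.single_apply]
  · have hρ : rhoR E α v = 0 := le_antisymm (not_lt.1 hpos) (le_max_left _ _)
    simp [raiseOp, alphaR, hρ]

theorem rvecList_nil (E : V → V → Prop) (α : V → V → ℝ) : rvecList E α [] = 0 := rfl

theorem rvecList_cons (E : V → V → Prop) (α : V → V → ℝ) (v : V) (l : List V) :
    rvecList E α (v :: l) = Pi.single v (rhoR E α v / 2) + rvecList E (raiseOp E α v) l := by
  ext u
  rw [rvecList, Pi.add_apply, Pi.single_apply]

theorem raiseList_eq_alphaR (E : V → V → Prop) (α : V → V → ℝ) (l : List V) :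
    raiseList E α l = alphaR α (rvecList E α l) := by
  induction l generalizing α with
  | nil =>
    ext a b
    simp [raiseList, rvecList_nil, alphaR]
  | cons v l ih =>
    ext a b
    rw [raiseList, ih, rvecList_cons]
    simp only [raiseOp_eq_alphaR E α v, alphaR, Pi.add_apply]
    ring

theorem rvecList_append (E : V → V → Prop) (α : V → V → ℝ) (l l' : List V) :
    rvecList E α (l ++ l') = rvecList E α l + rvecList E (raiseList E α l) l' := by
  induction l generalizing α with
  | nil => rw [List.nil_append, rvecList_nil, raiseList, zero_add]
  | cons v l ih => rw [List.cons_append, rvecList_cons, rvecList_cons, ih, raiseList, add_assoc]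

theorem rvecList_append_singleton (E : V → V → Prop) (α : V → V → ℝ) (l : List V) (v : V) :
    rvecList E α (l ++ [v]) = raiseVector E α v (rvecList E α l) := by
  rw [rvecList_append, raiseList_eq_alphaR, rvecList_cons, rvecList_nil, add_zero,
    raiseVector]

theorem rvecList_eq_zero_of_notMem {l : List V} {u : V} (hu : u ∉ l) :
    rvecList E α l u = 0 := by
  induction l generalizing α with
  | nil => rw [rvecList_nil, Pi.zero_apply]
  | cons v l ih =>
    rw [List.mem_cons, not_or] at hu
    rw [rvecList_cons, Pi.add_apply, Pi.single_eq_of_ne hu.1, ih hu.2, add_zero]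

theorem finite_range_rvecList (E : V → V → Prop) (α : V → V → ℝ) (l : List V) :
    (Set.range (rvecList E α l)).Finite := by
  refine ((l.finite_toSet.image (rvecList E α l)).insert 0).subset ?_
  rintro _ ⟨u, rfl⟩
  by_cases hu : u ∈ l
  · exact .inr ⟨u, hu, rfl⟩
  · exact .inl (rvecList_eq_zero_of_notMem hu)

theorem LocallyBddAbove.alphaR_rvecList (h : LocallyBddAbove E α) (l : List V) :
    LocallyBddAbove E (alphaR α (rvecList E α l)) :=
  h.alphaR (finite_range_rvecList E α l).bddAbove (finite_range_rvecList E α l).bddBelow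

end RaisingVectors

theorem raising_vector_monotonicity_general [DecidableEq V] (E : V → V → Prop)
    (hout : ∀ v, ∃ w, E v w) (hin : ∀ v, ∃ u, E u v)
    (α : V → V → ℝ) (hα : LocallyBddAbove E α) (l1 l2 : List V) (v : V)
    (hrs : ∀ u, rvecList E α l1 u ≤ rvecList E α l2 u) :
    ∀ u, rvecList E α (l1 ++ [v]) u ≤ rvecList E α (l2 ++ [v]) u := by
  rw [rvecList_append_singleton, rvecList_append_singleton]
  exact raiseVector_mono (hα.alphaR_rvecList l1) (hα.alphaR_rvecList l2) (hout v) (hin v) hrs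

/-- If two raising vectors obtained from a common initial graph
function via finite sequences of raising operations satisfy `r ≤ s` coordinatewise,
then after one additional raising operation at a common vertex `v` the resulting
raising vectors still satisfy `r' ≤ s'` coordinatewise. -/
theorem raising_vector_monotonicity
    [Fintype V] [Nonempty V] [DecidableEq V] (E : V → V → Prop)
    (hout : ∀ v, ∃ w, E v w) (hin : ∀ v, ∃ u, E u v)
    (hconn : ∀ u v : V, Relation.ReflTransGen E u v)
    (α : V → V → ℝ) (l1 l2 : List V) (v : V)
    (hrs : ∀ u, rvecList E α l1 u ≤ rvecList E α l2 u) :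
    ∀ u, rvecList E α (l1 ++ [v]) u ≤ rvecList E α (l2 ++ [v]) u := by
  exact raising_vector_monotonicity_general E hout hin α (.of_finite E α) l1 l2 v hrs
end
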